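/- arXiv:2506.01651 — 2 statements merged into one kernel-verified Lean document; each statement's English description precedes it below -/
import Mathlib

section
/- Let n ≥ 1, and let v : ℤ/nℤ → ℤ² and b : ℤ/nℤ → ℤ satisfy: (i) v(0) and v(1) are linearly independent (equivalently, the 2×2 matrix with columns v(0), v(1) has nonzero determinant), and (ii) v(i+1) = b(i)·v(i) − v(i−1) for every i ∈ ℤ/nℤ. Then the ordered product M(b(0))·M(b(n−1))·M(b(n−2))⋯M(b(2))·M(b(1)) is the 2×2 identity matrix. -/
open Matrix

/-- The transition matrix `M(b) = !![b, 1; -1, 0]` of the integral affine structure. -/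
def M (b : ℤ) : Matrix (Fin 2) (Fin 2) ℤ := !![b, 1; -1, 0]

/-- The frame at `i`, with rows `v i` and `-v (i-1)`. -/
def frameW {n : ℕ} (v : ZMod n → Fin 2 → ℤ) (i : ZMod n) : Matrix (Fin 2) (Fin 2) ℤ :=
  !![v i 0, v i 1; -v (i - 1) 0, -v (i - 1) 1]

lemma frameW_step {n : ℕ} (v : ZMod n → Fin 2 → ℤ) (b : ZMod n → ℤ)
    (hrec : ∀ i : ZMod n, v (i + 1) = b i • v i - v (i - 1)) (i : ZMod n) :
    M (b i) * frameW v i = frameW v (i + 1) := by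
  ext r c
  fin_cases r <;> fin_cases c <;>
    simp [M, frameW, Matrix.mul_apply, Fin.sum_univ_two, hrec i] <;> ring

lemma frameW_prod {n : ℕ} (v : ZMod n → Fin 2 → ℤ) (b : ZMod n → ℤ)
    (hrec : ∀ i : ZMod n, v (i + 1) = b i • v i - v (i - 1)) (k : ℕ) :
    ((List.range k).map (fun j => M (b ((k - j : ℕ) : ZMod n)))).prod * frameW v 1
      = frameW v ((k : ZMod n) + 1) := by
  induction k with
  | zero => simp
  | succ k ih =>
    rw [List.range_succ_eq_map, List.map_cons, List.prod_cons, List.map_map]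
    have h : ((fun j => M (b ((k + 1 - j : ℕ) : ZMod n))) ∘ Nat.succ)
        = fun j => M (b ((k - j : ℕ) : ZMod n)) := by
      funext j
      simp
    rw [h, Matrix.mul_assoc, ih, ← frameW_step v b hrec ((k + 1 : ℕ) : ZMod n)]
    simp

/-- For a cyclic family `v : ℤ/nℤ → ℤ²` of ray generators of a complete smooth toric fan,
satisfying `v(i+1) = b(i)·v(i) - v(i-1)` with `v(0), v(1)` linearly independent, the
monodromy `M(b(0))·M(b(n-1))·⋯·M(b(1))` around the toric vertex is trivial. -/
theorem stmt2 (n : ℕ) (hn : 1 ≤ n) (v : ZMod n → Fin 2 → ℤ) (b : ZMod n → ℤ)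
    (hindep : (!![v 0 0, v 1 0; v 0 1, v 1 1] : Matrix (Fin 2) (Fin 2) ℤ).det ≠ 0)
    (hrec : ∀ i : ZMod n, v (i + 1) = b i • v i - v (i - 1)) :
    ((List.range n).map (fun j => M (b ((n - j : ℕ) : ZMod n)))).prod = 1 := by
  have h := frameW_prod v b hrec n
  rw [ZMod.natCast_self, zero_add] at h
  generalize ((List.range n).map (fun j => M (b ((n - j : ℕ) : ZMod n)))).prod = P at h ⊢
  have hd : (frameW v 1).det ≠ 0 := by
    intro h0
    apply hindep
    simp only [frameW, sub_self, Matrix.det_fin_two_of] at h0 ⊢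
    linarith
  have h2 : (frameW v 1).det • (P - 1) = 0 := by
    have h3 : (P - 1) * frameW v 1 = 0 := by rw [Matrix.sub_mul, h, Matrix.one_mul, sub_self]
    have h4 := congrArg (· * (frameW v 1).adjugate) h3
    simp only [Matrix.mul_assoc, Matrix.mul_adjugate, Matrix.mul_smul, Matrix.mul_one,
      Matrix.zero_mul] at h4
    exact h4
  rcases smul_eq_zero.mp h2 with h5 | h5
  · exact absurd h5 hd
  · exact sub_eq_zero.mp h5
end

section
/- Let n ≥ 1 and let V ⊆ ℝⁿ be a nonempty open connected set. Let c, c′ : ℤⁿ → ℝ ∪ {+∞} be functions, each finite at at least one index, such that for every x ∈ V the functions I ↦ c(I) + ⟨I, x⟩ and I ↦ c′(I) + ⟨I, x⟩ tend to +∞ along the cofinite filter on ℤⁿ (here ⟨I, x⟩ = Σᵢ Iᵢxᵢ). Define f(x) = inf_{I ∈ ℤⁿ} (c(I) + ⟨I, x⟩) and g(x) = inf_{I ∈ ℤⁿ} (c′(I) + ⟨I, x⟩). If f(x) + g(x) = 0 for all x ∈ V, then there exists a unique I₀ ∈ ℤⁿ such that c(I₀) is finite and f(x) = c(I₀) + ⟨I₀,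 x⟩ for all x ∈ V. -/
open Filter

theorem aux_slope {n : ℕ} {V : Set (Fin n → ℝ)} (hV : IsOpen V) {x : Fin n → ℝ} (hx : x ∈ V)
    (K : Fin n → ℝ) (d : ℝ) (h0 : d + ∑ i, K i * x i = 0)
    (h : ∀ y ∈ V, 0 ≤ d + ∑ i, K i * y i) : K = 0 := by
  have hcont : Continuous (fun t : ℝ => x - t • K) := by fun_prop
  have hmem : (fun t : ℝ => x - t • K) ⁻¹' V ∈ nhds (0 : ℝ) :=
    (hV.preimage hcont).mem_nhds (by simpa using hx)
  obtain ⟨e, he, hb⟩ := Metric.mem_nhds_iff.1 hmem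
  have h1 : x - (e / 2) • K ∈ V := hb (by
    rw [Metric.mem_ball, Real.dist_eq, sub_zero, abs_of_pos (by linarith)]; linarith)
  have h2 := h _ h1
  have h3 : ∑ i, K i * (x - (e / 2) • K) i = ∑ i, K i * x i - (e / 2) * ∑ i, K i * K i := by
    rw [Finset.mul_sum, ← Finset.sum_sub_distrib]
    refine Finset.sum_congr rfl fun i _ => ?_
    simp only [Pi.sub_apply, Pi.smul_apply, smul_eq_mul]
    ring
  rw [h3] at h2
  have h4 : ∑ i, K i * K i ≤ 0 := by
    by_contra hlt
    push Not at hlt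
    have : 0 < (e / 2) * ∑ i, K i * K i := by positivity
    linarith
  have h5 : ∑ i, K i * K i = 0 :=
    le_antisymm h4 (Finset.sum_nonneg fun i _ => mul_self_nonneg _)
  rw [Finset.sum_eq_zero_iff_of_nonneg fun i _ => mul_self_nonneg _] at h5
  funext i
  exact mul_self_eq_zero.1 (h5 i (Finset.mem_univ i))

theorem aux_attain {ι : Type*} (u : ι → EReal) (hu : Tendsto u cofinite (nhds ⊤))
    (hne : (⨅ I, u I) ≠ ⊤) : ∃ I, (⨅ J, u J) = u I := by
  obtain ⟨I₁, h1⟩ := iInf_lt_iff.1 (lt_top_iff_ne_top.2 hne)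
  have hfin : {I | ¬ (u I₁ < u I)}.Finite :=
    eventually_cofinite.1 (hu.eventually (lt_mem_nhds h1))
  obtain ⟨I, hI, hmin⟩ := Set.exists_min_image _ u hfin ⟨I₁, by simp⟩
  refine ⟨I, le_antisymm (iInf_le _ _) (le_iInf fun J => ?_)⟩
  by_cases hJ : u I₁ < u J
  · exact (hmin I₁ (by simp)).trans hJ.le
  · exact hmin J hJ

theorem aux_real {a : EReal} {r : ℝ} (h1 : a + (r : EReal) ≠ ⊤) (h2 : a + (r : EReal) ≠ ⊥) :
    ∃ s : ℝ, a = s := by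
  induction a using EReal.rec with
  | bot => simp at h2
  | top => simp at h1
  | coe s => exact ⟨s, rfl⟩

theorem aux_sum {a b : EReal} (h : a + b = 0) : (a ≠ ⊤ ∧ a ≠ ⊥) ∧ (b ≠ ⊤ ∧ b ≠ ⊥) := by
  induction a using EReal.rec <;> induction b using EReal.rec <;> simp_all

/-- Uniqueness of the dominant affine term: if `f(x) = ⨅_I (c(I) + ⟨I,x⟩)` and
`g(x) = ⨅_I (c'(I) + ⟨I,x⟩)` are infima of affine functions with integral slopes,
satisfying the coercivity coming from convergent Laurent series, and `f + g = 0` on a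
nonempty open connected set `V`, then there is a unique `I₀` with `c(I₀)` finite such that
`f(x) = c(I₀) + ⟨I₀, x⟩` for all `x ∈ V`. -/
theorem stmt4 (n : ℕ) (hn : 1 ≤ n) (V : Set (Fin n → ℝ)) (hV : IsOpen V)
    (hVconn : IsConnected V)
    (c c' : (Fin n → ℤ) → EReal)
    (hc : ∃ I, c I ≠ ⊤) (hc' : ∃ I, c' I ≠ ⊤)
    (hcoer : ∀ x ∈ V, Tendsto
      (fun I : Fin n → ℤ => c I + ((∑ i, (I i : ℝ) * x i : ℝ) : EReal))
      cofinite (nhds ⊤))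
    (hcoer' : ∀ x ∈ V, Tendsto
      (fun I : Fin n → ℤ => c' I + ((∑ i, (I i : ℝ) * x i : ℝ) : EReal))
      cofinite (nhds ⊤))
    (hsum : ∀ x ∈ V,
      (⨅ I : Fin n → ℤ, c I + ((∑ i, (I i : ℝ) * x i : ℝ) : EReal)) +
      (⨅ I : Fin n → ℤ, c' I + ((∑ i, (I i : ℝ) * x i : ℝ) : EReal)) = 0) :
    ∃! I₀ : Fin n → ℤ, c I₀ ≠ ⊤ ∧ ∀ x ∈ V,
      (⨅ I : Fin n → ℤ, c I + ((∑ i, (I i : ℝ) * x i : ℝ) : EReal)) =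
        c I₀ + ((∑ i, (I₀ i : ℝ) * x i : ℝ) : EReal) := by
  obtain ⟨x, hx⟩ := hVconn.nonempty
  obtain ⟨⟨hft, hfb⟩, hgt, hgb⟩ := aux_sum (hsum x hx)
  obtain ⟨I, hI⟩ := aux_attain _ (hcoer x hx) hft
  obtain ⟨J, hJ⟩ := aux_attain _ (hcoer' x hx) hgt
  obtain ⟨a, ha⟩ := aux_real (hI ▸ hft) (hI ▸ hfb)
  obtain ⟨b, hb⟩ := aux_real (hJ ▸ hgt) (hJ ▸ hgb)
  have hsx := hsum x hx
  rw [hI, hJ, ha, hb] at hsx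
  have hsx' : (a + ∑ i, (I i : ℝ) * x i) + (b + ∑ i, (J i : ℝ) * x i) = 0 := by
    exact_mod_cast hsx
  have hadd : ∀ y : Fin n → ℝ, ∑ i, ((I i : ℝ) + J i) * y i
      = ∑ i, (I i : ℝ) * y i + ∑ i, (J i : ℝ) * y i := fun y => by
    rw [← Finset.sum_add_distrib]
    exact Finset.sum_congr rfl fun i _ => by ring
  have hK := aux_slope hV hx (fun i => (I i : ℝ) + J i) (a + b)
    (by rw [hadd]; linarith) (fun y hy => by
      have h1 := add_le_add (iInf_le (fun I : Fin n → ℤ =>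
        c I + ((∑ i, (I i : ℝ) * y i : ℝ) : EReal)) I) (iInf_le (fun I : Fin n → ℤ =>
        c' I + ((∑ i, (I i : ℝ) * y i : ℝ) : EReal)) J)
      rw [hsum y hy] at h1
      simp only [ha, hb] at h1
      have h2 : 0 ≤ (a + ∑ i, (I i : ℝ) * y i) + (b + ∑ i, (J i : ℝ) * y i) := by
        exact_mod_cast h1
      rw [hadd]; linarith)
  have hz : ∀ y : Fin n → ℝ, ∑ i, (I i : ℝ) * y i + ∑ i, (J i : ℝ) * y i = 0 := fun y => by
    rw [← hadd]
    exact Finset.sum_eq_zero fun i _ => by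
      have := congrFun hK i
      simp only [Pi.zero_apply] at this
      rw [this, zero_mul]
  have hab : a + b = 0 := by have := hz x; linarith
  have hmain : ∀ y ∈ V, (⨅ I : Fin n → ℤ, c I + ((∑ i, (I i : ℝ) * y i : ℝ) : EReal)) =
      ((a + ∑ i, (I i : ℝ) * y i : ℝ) : EReal) := fun y hy => by
    have hs := hsum y hy
    obtain ⟨⟨h1, h2⟩, h3, h4⟩ := aux_sum hs
    have hf := iInf_le (fun I : Fin n → ℤ =>
        c I + ((∑ i, (I i : ℝ) * y i : ℝ) : EReal)) I
    have hg := iInf_le (fun I : Fin n → ℤ =>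
        c' I + ((∑ i, (I i : ℝ) * y i : ℝ) : EReal)) J
    simp only [ha, hb] at hf hg
    generalize (⨅ I : Fin n → ℤ, c I + ((∑ i, (I i : ℝ) * y i : ℝ) : EReal)) = F at *
    generalize (⨅ I : Fin n → ℤ, c' I + ((∑ i, (I i : ℝ) * y i : ℝ) : EReal)) = G at *
    lift F to ℝ using ⟨h1, h2⟩
    lift G to ℝ using ⟨h3, h4⟩
    have hf' : F ≤ a + ∑ i, (I i : ℝ) * y i := by exact_mod_cast hf
    have hg' : G ≤ b + ∑ i, (J i : ℝ) * y i := by exact_mod_cast hg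
    have hs' : F + G = 0 := by exact_mod_cast hs
    have := hz y
    exact congrArg _ (by linarith)
  refine ⟨I, ⟨by simp [ha], fun y hy => by rw [hmain y hy, ha, EReal.coe_add]⟩, ?_⟩
  rintro L ⟨-, hL⟩
  have hLx := hL x hx
  obtain ⟨l, hl⟩ := aux_real (hLx ▸ hft) (hLx ▸ hfb)
  have hLy : ∀ y ∈ V, a + ∑ i, (I i : ℝ) * y i = l + ∑ i, (L i : ℝ) * y i := fun y hy => by
    have h := hL y hy
    rw [hmain y hy, hl] at h
    exact_mod_cast h
  have hsub : ∀ y : Fin n → ℝ, ∑ i, ((L i : ℝ) - I i) * y i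
      = ∑ i, (L i : ℝ) * y i - ∑ i, (I i : ℝ) * y i := fun y => by
    rw [← Finset.sum_sub_distrib]
    exact Finset.sum_congr rfl fun i _ => by ring
  have hK' := aux_slope hV hx (fun i => (L i : ℝ) - I i) (l - a)
    (by rw [hsub]; linarith [hLy x hx]) (fun y hy => by rw [hsub]; linarith [hLy y hy])
  funext i
  have := congrFun hK' i
  simp only [Pi.zero_apply] at this
  exact_mod_cast sub_eq_zero.1 this
end
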